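/- Let α ∈ D and let γ be a monomial with γ ≠ α and α + γ ∈ ⟨𝓕⟩. Then deg(γ) > deg(α), where deg denotes total degree. -/

import Mathlib

open MvPolynomial

/-- Monomials in the variables `σ`, represented by their exponent vectors. -/
abbrev Mon (σ : Type*) := σ →₀ ℕ

/-- A monomial order: a total order on monomials such that `1 ≼ t` for every monomial `t`
and `t ≼ u → t·v ≼ u·v` (written additively on exponent vectors). -/
structure MonOrd (σ : Type*) where
  le : Mon σ → Mon σ → Prop
  le_refl : ∀ t, le t t
  le_trans : ∀ t u v, le t u → le u v → le t v
  le_antisymm : ∀ t u, le t u → le u t → t = u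
  le_total : ∀ t u, le t u ∨ le u t
  zero_le : ∀ t, le 0 t
  add_le_add : ∀ t u v, le t u → le (t + v) (u + v)

/-- Strict version of a monomial order. -/
def MonOrd.lt {σ : Type*} (μ : MonOrd σ) (t u : Mon σ) : Prop := μ.le t u ∧ t ≠ u

/-- The extension of a monomial order (given by the relation `r` on monomials) to polynomials:
`g ≼ f` iff `g = f` or the greatest monomial on which `f` and `g` differ occurs in `f`.
(This is the closed form of the recursive definition: `g ≼ f` iff `g = f`, or
`HT g ≺ HT f`, or `HT g = HT f` and `g - HT g ≼ f - HT f`, with `0` the least polynomial.) -/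
def polyLe {σ : Type*} (r : Mon σ → Mon σ → Prop) (g f : MvPolynomial σ (ZMod 2)) : Prop :=
  g = f ∨ ∃ t, t ∈ f.support ∧ t ∉ g.support ∧
    ∀ u : Mon σ, ((u ∈ f.support ∧ u ∉ g.support) ∨ (u ∈ g.support ∧ u ∉ f.support)) → r u t

/-- Strict extension of a monomial order to polynomials. -/
def polyLt {σ : Type*} (r : Mon σ → Mon σ → Prop) (g f : MvPolynomial σ (ZMod 2)) : Prop :=
  polyLe r g f ∧ g ≠ f

/-- `S_F`: the set of non-residual polynomials with respect to `F` and the monomial order `r`,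
i.e. those `f` admitting a `g` with `f + g ∈ ⟨F⟩` and `g ≺ f`. -/
def SF {σ : Type*} (r : Mon σ → Mon σ → Prop) (F : Set (MvPolynomial σ (ZMod 2))) :
    Set (MvPolynomial σ (ZMod 2)) :=
  {f | ∃ g, f + g ∈ Ideal.span F ∧ polyLt r g f}

/-- `t` is the head monomial (`r`-greatest monomial) of the polynomial `f`. -/
def IsHT {σ : Type*} (r : Mon σ → Mon σ → Prop) (f : MvPolynomial σ (ZMod 2)) (t : Mon σ) :
    Prop :=
  t ∈ f.support ∧ ∀ u ∈ f.support, r u t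

/-- `HT(S)`: the set of head monomials (as polynomials) of the nonzero elements of `S`. -/
def HTset {σ : Type*} (r : Mon σ → Mon σ → Prop) (S : Set (MvPolynomial σ (ZMod 2))) :
    Set (MvPolynomial σ (ZMod 2)) :=
  {p | ∃ f ∈ S, f ≠ 0 ∧ ∃ t, IsHT r f t ∧ p = monomial t 1}

/-- The divisibility (componentwise) order `◁` on monomials. -/
def triMon {σ : Type*} (t u : Mon σ) : Prop := ∀ x, t x ≤ u x

/-- The order `◁` on polynomials: `p ◁ q` iff there is an injective map `φ` from the
monomials of `p` to the monomials of `q` with `t ◁ φ t` for each monomial `t` of `p`. -/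
def triPoly {σ : Type*} (p q : MvPolynomial σ (ZMod 2)) : Prop :=
  ∃ φ : Mon σ → Mon σ, Set.InjOn φ ↑p.support ∧ ∀ t ∈ p.support, φ t ∈ q.support ∧ triMon t (φ t)

/-- Upward closure with respect to `◁`. -/
def upClo {σ : Type*} (A : Set (MvPolynomial σ (ZMod 2))) : Set (MvPolynomial σ (ZMod 2)) :=
  {q | ∃ p ∈ A, triPoly p q}

/-- `Min_◁(A)`: the `◁`-minimal elements of `A`. -/
def minTri {σ : Type*} (A : Set (MvPolynomial σ (ZMod 2))) : Set (MvPolynomial σ (ZMod 2)) :=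
  {p | p ∈ A ∧ ∀ q ∈ A, triPoly q p → q = p}

/-- `G` is a Gröbner basis of the ideal `I` with respect to the monomial order `r`. -/
def IsGB {σ : Type*} (r : Mon σ → Mon σ → Prop) (G : Finset (MvPolynomial σ (ZMod 2)))
    (I : Ideal (MvPolynomial σ (ZMod 2))) : Prop :=
  (↑G : Set (MvPolynomial σ (ZMod 2))) ⊆ ↑I ∧
    Ideal.span (↑G : Set (MvPolynomial σ (ZMod 2))) = I ∧
    Ideal.span (HTset r (↑I : Set (MvPolynomial σ (ZMod 2)))) = Ideal.span (HTset r ↑G)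

/-- `G` is a reduced Gröbner basis of `I` with respect to `r`. -/
def IsReducedGB {σ : Type*} (r : Mon σ → Mon σ → Prop) (G : Finset (MvPolynomial σ (ZMod 2)))
    (I : Ideal (MvPolynomial σ (ZMod 2))) : Prop :=
  IsGB r G I ∧ ∀ f ∈ G, ¬ ∀ t ∈ f.support,
    (monomial t 1 : MvPolynomial σ (ZMod 2)) ∈
      Ideal.span (HTset r ((↑G : Set (MvPolynomial σ (ZMod 2))) \ {f}))

/-- The variable set `X`: the special variables `s, ℓ, c, c̄, b, b̄` together with, for each
`0 ≤ i ≤ n`, the variables `s_i, f_i, q_{ji}, c_{ji}, b_{ji}` (`1 ≤ j ≤ 4`, encoded by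
`j : Fin 4`) and their barred copies (`bar = true`). -/
inductive MVar (n : ℕ) : Type where
  | vs | vl | vc | vcb | vb | vbb
  | vS (bar : Bool) (i : Fin (n+1))
  | vF (bar : Bool) (i : Fin (n+1))
  | vQ (bar : Bool) (j : Fin 4) (i : Fin (n+1))
  | vC (bar : Bool) (j : Fin 4) (i : Fin (n+1))
  | vB (bar : Bool) (j : Fin 4) (i : Fin (n+1))
deriving DecidableEq

open MVar

abbrev MPoly (n : ℕ) := MvPolynomial (MVar n) (ZMod 2)

/-- `e(n) = 2^(2^n)`. -/
def en (n : ℕ) : ℕ := 2 ^ 2 ^ n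

/-- The set `P_0` (barred copy if `bar = true`). -/
def P0 (n : ℕ) (bar : Bool) : Set (MPoly n) :=
  {p | ∃ j : Fin 4, p =
    X (vB bar j 0) ^ 2 * X (vC bar j 0) * X (vF bar 0) + X (vC bar j 0) * X (vS bar 0)}

/-- The set `P_m` for `m = i+1`, `i : Fin n` (barred copy if `bar = true`).
Here `i.succ` plays the role of `m` and `i.castSucc` the role of `m-1`; the indices
`1,2,3,4` of the paper are encoded as `0,1,2,3 : Fin 4`. -/
def Pm (n : ℕ) (bar : Bool) (i : Fin n) : Set (MPoly n) :=
  ({ X (vQ bar 0 i.succ) * X (vC bar 0 i.castSucc) * X (vS bar i.castSucc) + X (vS bar i.succ),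
    X (vQ bar 1 i.succ) * X (vC bar 1 i.castSucc) * X (vS bar i.castSucc)
      + X (vQ bar 0 i.succ) * X (vB bar 0 i.castSucc) * X (vC bar 0 i.castSucc)
        * X (vF bar i.castSucc),
    X (vQ bar 2 i.succ) * X (vC bar 2 i.castSucc) * X (vF bar i.castSucc)
      + X (vQ bar 1 i.succ) * X (vC bar 1 i.castSucc) * X (vF bar i.castSucc),
    X (vQ bar 2 i.succ) * X (vB bar 0 i.castSucc) * X (vC bar 2 i.castSucc)
        * X (vS bar i.castSucc)
      + X (vQ bar 1 i.succ) * X (vB bar 3 i.castSucc) * X (vC bar 1 i.castSucc)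
        * X (vS bar i.castSucc),
    X (vQ bar 3 i.succ) * X (vB bar 3 i.castSucc) * X (vC bar 3 i.castSucc)
        * X (vF bar i.castSucc)
      + X (vQ bar 2 i.succ) * X (vC bar 2 i.castSucc) * X (vS bar i.castSucc),
    X (vQ bar 3 i.succ) * X (vC bar 3 i.castSucc) * X (vS bar i.castSucc)
      + X (vF bar i.succ) } : Set (MPoly n))
  ∪ {p | ∃ j : Fin 4, p =
      X (vQ bar 1 i.succ) * X (vB bar 2 i.castSucc) * X (vB bar j i.succ) * X (vC bar j i.succ)
          * X (vF bar i.castSucc)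
        + X (vQ bar 1 i.succ) * X (vB bar 1 i.castSucc) * X (vC bar j i.succ)
          * X (vF bar i.castSucc)}

/-- The set `P = P_0 ∪ P_1 ∪ ⋯ ∪ P_n`; for `bar = true` this is the barred copy `P̄`
(the image of `P` under the substitution replacing each variable by its barred version). -/
def PP (n : ℕ) (bar : Bool) : Set (MPoly n) := P0 n bar ∪ ⋃ i : Fin n, Pm n bar i

/-- The set `G` of seven extra binomials. -/
def GG (n : ℕ) : Set (MPoly n) :=
  { X (vB false 3 (Fin.last n)) * X vl * X vb + X vl * X vc,
    X (vB false 3 (Fin.last n)) * X vl * X vbb + X vl * X vcb,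
    X (vC false 3 (Fin.last n)) * X (vF false (Fin.last n)) + X vl,
    X (vC true 3 (Fin.last n)) * X (vF true (Fin.last n))
      + X (vC false 3 (Fin.last n)) * X (vS false (Fin.last n)),
    X (vB true 3 (Fin.last n)) * X (vC false 3 (Fin.last n)) * X (vS false (Fin.last n))
      + X (vC false 3 (Fin.last n)) * X (vS false (Fin.last n)) * X vb,
    X (vB true 3 (Fin.last n)) * X (vC false 3 (Fin.last n)) * X (vS false (Fin.last n))
      + X (vC false 3 (Fin.last n)) * X (vS false (Fin.last n)) * X vbb,
    X (vC true 3 (Fin.last n)) * X (vS true (Fin.last n)) + X vs }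

/-- The set `𝓕 = P ∪ P̄ ∪ G`. -/
def FF (n : ℕ) : Set (MPoly n) := PP n false ∪ PP n true ∪ GG n

/-- The set `C = {ℓ c̄^{m1} c^{m2} : m1 + m2 = e(n)}` of monomials. -/
def Cmon (n : ℕ) : Set (Mon (MVar n)) :=
  {α | ∃ m1 m2 : ℕ, m1 + m2 = en n ∧
    α = Finsupp.single vl 1 + Finsupp.single vcb m1 + Finsupp.single vc m2}

/-- The set `D = {ℓ^j c̄^{m1} c^{m2} : j ∈ {0,1}, j + m1 + m2 ≤ e(n)}` of monomials. -/
def Dmon (n : ℕ) : Set (Mon (MVar n)) :=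
  {α | ∃ j m1 m2 : ℕ, j ≤ 1 ∧ j + m1 + m2 ≤ en n ∧
    α = Finsupp.single vl j + Finsupp.single vcb m1 + Finsupp.single vc m2}

/-- An injective rank function on the variables realizing the variable ordering
(from least to greatest): `s, c, c̄, ℓ, b, b̄`; then `s_0,…,s_n`; `f_0,…,f_n`;
`c_{10},…,c_{1n}; …; c_{40},…,c_{4n}`; `b_{10},…,b_{4n}`; `q_{10},…,q_{4n}`;
then the barred variables in the same pattern. -/
def vrank (n : ℕ) : MVar n → ℕ
  | .vs => 0
  | .vc => 1
  | .vcb => 2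
  | .vl => 3
  | .vb => 4
  | .vbb => 5
  | .vS bar i => 6 + (cond bar (14 * (n+1)) 0) + (i : ℕ)
  | .vF bar i => 6 + (cond bar (14 * (n+1)) 0) + (n+1) + (i : ℕ)
  | .vC bar j i => 6 + (cond bar (14 * (n+1)) 0) + 2*(n+1) + (j : ℕ)*(n+1) + (i : ℕ)
  | .vB bar j i => 6 + (cond bar (14 * (n+1)) 0) + 6*(n+1) + (j : ℕ)*(n+1) + (i : ℕ)
  | .vQ bar j i => 6 + (cond bar (14 * (n+1)) 0) + 10*(n+1) + (j : ℕ)*(n+1) + (i : ℕ)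

/-- The lexicographic monomial order on `X`: `t ≼_lex u` iff `t = u` or the exponents differ
somewhere and at the greatest variable (w.r.t. `vrank`) where they differ, the exponent of
`t` is smaller. -/
def lexLe (n : ℕ) (t u : Mon (MVar n)) : Prop :=
  t = u ∨ ∃ x : MVar n, t x < u x ∧ ∀ y : MVar n, vrank n x < vrank n y → t y = u y

/-- The total degree of a monomial. -/
def mdeg {σ : Type*} (t : Mon σ) : ℕ := t.sum fun _ k => k

/-- The degree lexicographic monomial order. -/
def degLexLe (n : ℕ) (t u : Mon (MVar n)) : Prop :=
  mdeg t < mdeg u ∨ (mdeg t = mdeg u ∧ lexLe n t u)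

/-- Weighted degree of a monomial with respect to a weight map `w`. -/
noncomputable def wdeg {n : ℕ} (w : MVar n → ℝ) (t : Mon (MVar n)) : ℝ :=
  t.sum fun x k => (k : ℝ) * w x

/-- The weighted monomial order determined by the weight map `w`. -/
def wLe {n : ℕ} (w : MVar n → ℝ) (t u : Mon (MVar n)) : Prop := t = u ∨ wdeg w t < wdeg w u


/-! ### Auxiliary material -/

/-- The monomial with exponent one at `a`. -/
noncomputable abbrev sg {n : ℕ} (a : MVar n) : Mon (MVar n) := Finsupp.single a 1

/-- The rewriting rules of level `0`. -/
inductive RuleZ (n : ℕ) (bar : Bool) : Mon (MVar n) → Mon (MVar n) → Prop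
  | mk (j : Fin 4) : RuleZ n bar
      (sg (vB bar j 0) + sg (vB bar j 0) + sg (vC bar j 0) + sg (vF bar 0))
      (sg (vC bar j 0) + sg (vS bar 0))

/-- The rewriting rules of level `i + 1`. -/
inductive RuleP (n : ℕ) (bar : Bool) (i : Fin n) : Mon (MVar n) → Mon (MVar n) → Prop
  | r1 : RuleP n bar i
      (sg (vQ bar 0 i.succ) + sg (vC bar 0 i.castSucc) + sg (vS bar i.castSucc))
      (sg (vS bar i.succ))
  | r2 : RuleP n bar i
      (sg (vQ bar 1 i.succ) + sg (vC bar 1 i.castSucc) + sg (vS bar i.castSucc))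
      (sg (vQ bar 0 i.succ) + sg (vB bar 0 i.castSucc) + sg (vC bar 0 i.castSucc)
        + sg (vF bar i.castSucc))
  | r3 : RuleP n bar i
      (sg (vQ bar 2 i.succ) + sg (vC bar 2 i.castSucc) + sg (vF bar i.castSucc))
      (sg (vQ bar 1 i.succ) + sg (vC bar 1 i.castSucc) + sg (vF bar i.castSucc))
  | r4 : RuleP n bar i
      (sg (vQ bar 2 i.succ) + sg (vB bar 0 i.castSucc) + sg (vC bar 2 i.castSucc)
        + sg (vS bar i.castSucc))
      (sg (vQ bar 1 i.succ) + sg (vB bar 3 i.castSucc) + sg (vC bar 1 i.castSucc)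
        + sg (vS bar i.castSucc))
  | r5 : RuleP n bar i
      (sg (vQ bar 3 i.succ) + sg (vB bar 3 i.castSucc) + sg (vC bar 3 i.castSucc)
        + sg (vF bar i.castSucc))
      (sg (vQ bar 2 i.succ) + sg (vC bar 2 i.castSucc) + sg (vS bar i.castSucc))
  | r6 : RuleP n bar i
      (sg (vQ bar 3 i.succ) + sg (vC bar 3 i.castSucc) + sg (vS bar i.castSucc))
      (sg (vF bar i.succ))
  | r7 (j : Fin 4) : RuleP n bar i
      (sg (vQ bar 1 i.succ) + sg (vB bar 2 i.castSucc) + sg (vB bar j i.succ)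
        + sg (vC bar j i.succ) + sg (vF bar i.castSucc))
      (sg (vQ bar 1 i.succ) + sg (vB bar 1 i.castSucc) + sg (vC bar j i.succ)
        + sg (vF bar i.castSucc))

/-- The seven extra rewriting rules. -/
inductive RuleG (n : ℕ) : Mon (MVar n) → Mon (MVar n) → Prop
  | g1 : RuleG n (sg (vB false 3 (Fin.last n)) + sg vl + sg vb) (sg vl + sg vc)
  | g2 : RuleG n (sg (vB false 3 (Fin.last n)) + sg vl + sg vbb) (sg vl + sg vcb)
  | g3 : RuleG n (sg (vC false 3 (Fin.last n)) + sg (vF false (Fin.last n))) (sg vl)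
  | g4 : RuleG n (sg (vC true 3 (Fin.last n)) + sg (vF true (Fin.last n)))
      (sg (vC false 3 (Fin.last n)) + sg (vS false (Fin.last n)))
  | g5 : RuleG n (sg (vB true 3 (Fin.last n)) + sg (vC false 3 (Fin.last n))
        + sg (vS false (Fin.last n)))
      (sg (vC false 3 (Fin.last n)) + sg (vS false (Fin.last n)) + sg vb)
  | g6 : RuleG n (sg (vB true 3 (Fin.last n)) + sg (vC false 3 (Fin.last n))
        + sg (vS false (Fin.last n)))
      (sg (vC false 3 (Fin.last n)) + sg (vS false (Fin.last n)) + sg vbb)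
  | g7 : RuleG n (sg (vC true 3 (Fin.last n)) + sg (vS true (Fin.last n))) (sg vs)

/-- All rewriting rules. -/
inductive Rule (n : ℕ) : Mon (MVar n) → Mon (MVar n) → Prop
  | z (bar : Bool) {u v} (h : RuleZ n bar u v) : Rule n u v
  | p (bar : Bool) (i : Fin n) {u v} (h : RuleP n bar i u v) : Rule n u v
  | g {u v} (h : RuleG n u v) : Rule n u v

theorem monomial_sg_add {n : ℕ} (u v : Mon (MVar n)) :
    (monomial (u + v) 1 : MPoly n) = monomial u 1 * monomial v 1 := by
  simp [monomial_mul]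

theorem FF_rule {n : ℕ} {p : MPoly n} (hp : p ∈ FF n) :
    ∃ u v, Rule n u v ∧ p = monomial u 1 + monomial v 1 := by
  have hPP : ∀ bar, p ∈ PP n bar → ∃ u v, Rule n u v ∧ p = monomial u 1 + monomial v 1 := by
    intro bar h
    rcases h with ⟨j, rfl⟩ | h
    · exact ⟨_, _, .z bar (.mk j), by simp only [monomial_sg_add, sq]; rfl⟩
    · simp only [Set.mem_iUnion] at h
      obtain ⟨i, h | ⟨j, rfl⟩⟩ := h
      · simp only [Set.mem_insert_iff, Set.mem_singleton_iff] at h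
        rcases h with rfl | rfl | rfl | rfl | rfl | rfl
        · exact ⟨_, _, .p bar i .r1, by simp only [monomial_sg_add]; rfl⟩
        · exact ⟨_, _, .p bar i .r2, by simp only [monomial_sg_add]; rfl⟩
        · exact ⟨_, _, .p bar i .r3, by simp only [monomial_sg_add]; rfl⟩
        · exact ⟨_, _, .p bar i .r4, by simp only [monomial_sg_add]; rfl⟩
        · exact ⟨_, _, .p bar i .r5, by simp only [monomial_sg_add]; rfl⟩
        · exact ⟨_, _, .p bar i .r6, by simp only [monomial_sg_add]; rfl⟩
      · exact ⟨_, _, .p bar i (.r7 j), by simp only [monomial_sg_add]; rfl⟩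
  rcases hp with (h | h) | h
  · exact hPP _ h
  · exact hPP _ h
  · simp only [GG, Set.mem_insert_iff, Set.mem_singleton_iff] at h
    rcases h with rfl | rfl | rfl | rfl | rfl | rfl | rfl
    · exact ⟨_, _, .g .g1, by simp only [monomial_sg_add]; rfl⟩
    · exact ⟨_, _, .g .g2, by simp only [monomial_sg_add]; rfl⟩
    · exact ⟨_, _, .g .g3, by simp only [monomial_sg_add]; rfl⟩
    · exact ⟨_, _, .g .g4, by simp only [monomial_sg_add]; rfl⟩
    · exact ⟨_, _, .g .g5, by simp only [monomial_sg_add]; rfl⟩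
    · exact ⟨_, _, .g .g6, by simp only [monomial_sg_add]; rfl⟩
    · exact ⟨_, _, .g .g7, by simp only [monomial_sg_add]; rfl⟩

/-- A set of monomials closed under the rules is closed under congruence. -/
theorem closed_of_rules {n : ℕ} (S : Mon (MVar n) → Prop)
    (hS : ∀ u v, Rule n u v → ∀ r, S (r + u) ↔ S (r + v)) {α γ : Mon (MVar n)} (hα : S α)
    (h : (monomial α 1 + monomial γ 1 : MPoly n) ∈ Ideal.span (FF n)) : S γ := by
  classical
  let φ : MPoly n →ₗ[ZMod 2] ZMod 2 :=
    (Finsupp.lsum (ZMod 2) (fun t => if S t then LinearMap.id else 0)) ∘ₗ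
      (AddMonoidAlgebra.coeffLinearEquiv (ZMod 2)).toLinearMap
  have hφ : ∀ t a, φ (monomial t a) = if S t then a else 0 := by
    intro t a
    have : φ (monomial t a) = (Finsupp.lsum (ZMod 2) (fun t => if S t then
      (LinearMap.id : ZMod 2 →ₗ[ZMod 2] ZMod 2) else 0)) (Finsupp.single t a) := rfl
    rw [this]
    simp only [Finsupp.lsum_single]
    split_ifs <;> simp
  have key : ∀ p ∈ Ideal.span (FF n), ∀ q, φ (q * p) = 0 := by
    intro p hp
    induction hp using Submodule.span_induction with
    | zero => simp
    | add x y _ _ hx hy => intro q; simp [mul_add, hx, hy]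
    | mem x hx =>
      obtain ⟨u, v, huv, rfl⟩ := FF_rule hx
      intro q
      induction q using MvPolynomial.induction_on' with
      | add p q hp hq => rw [add_mul, map_add, hp, hq, add_zero]
      | monomial r a =>
        have := hS u v huv r
        simp only [mul_add, monomial_mul, map_add, hφ, this]
        exact CharTwo.add_self_eq_zero _
    | smul a x _ hx =>
      intro q
      rw [smul_eq_mul, ← mul_assoc]
      exact hx _
  have h1 := key _ h 1
  rw [one_mul, map_add, hφ, hφ] at h1
  by_contra hγ
  simp [hα, hγ] at h1

/-- Kronecker delta. -/
def dl (j a : Fin 4) : ℕ := if a = j then 1 else 0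

/-- All unbarred variables of level below `k` are absent. -/
def lz {n : ℕ} (t : Mon (MVar n)) (k : ℕ) : Prop :=
  ∀ p : Fin (n + 1), (p : ℕ) < k → t (vS false p) = 0 ∧ t (vF false p) = 0 ∧
    ∀ a, t (vQ false a p) = 0 ∧ t (vC false a p) = 0 ∧ t (vB false a p) = 0

/-- The state is at level `k`; `x` is the virtual vector of `b`-exponents. -/
def Atom {n : ℕ} (t : Mon (MVar n)) (k : ℕ) (hk : k < n + 1) (j : Fin 4) (x : Fin 4 → ℕ) : Prop :=
  (∀ a, t (vC false a ⟨k, hk⟩) = dl j a) ∧ (∀ a, t (vQ false a ⟨k, hk⟩) = 0) ∧ lz t k ∧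
  ((t (vS false ⟨k, hk⟩) = 1 ∧ t (vF false ⟨k, hk⟩) = 0 ∧
      ∀ a, x a = t (vB false a ⟨k, hk⟩) + en k * dl j a) ∨
   (t (vS false ⟨k, hk⟩) = 0 ∧ t (vF false ⟨k, hk⟩) = 1 ∧
      ∀ a, x a = t (vB false a ⟨k, hk⟩)))

/-- Validity of a virtual vector in phase `j`. -/
def val (e : ℕ) (j : Fin 4) (x : Fin 4 → ℕ) : Prop :=
  if j = 0 ∨ j = 3 then x 0 + x 3 = e ∧ x 1 = 0 ∧ x 2 = 0
  else x 1 + x 2 = e ∧ x 0 + x 3 + 1 = e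

/-- `t` is a configuration of level `k` with active index `j` and virtual vector `x`. -/
def VV {n : ℕ} (t : Mon (MVar n)) :
    (k : ℕ) → (hk : k < n + 1) → Fin 4 → (Fin 4 → ℕ) → Prop
  | 0, hk, j, x => Atom t 0 hk j x
  | k + 1, hk, j, x => Atom t (k + 1) hk j x ∨
      ((∀ a, t (vC false a ⟨k + 1, hk⟩) = dl j a) ∧ t (vS false ⟨k + 1, hk⟩) = 0 ∧
        t (vF false ⟨k + 1, hk⟩) = 0 ∧ ∃ j' x', (∀ a, t (vQ false a ⟨k + 1, hk⟩) = dl j' a) ∧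
        VV t k (by omega) j' x' ∧ val (en k) j' x' ∧
        ∀ a, x a = t (vB false a ⟨k + 1, hk⟩) + (en k * x' 0 + x' 1) * dl j a)

theorem VV_atom {n : ℕ} (t : Mon (MVar n)) (k : ℕ) (hk : k < n + 1) (j x)
    (h : t (vS false ⟨k, hk⟩) ≠ 0 ∨ t (vF false ⟨k, hk⟩) ≠ 0) :
    VV t k hk j x ↔ Atom t k hk j x := by
  cases k with
  | zero => rfl
  | succ k =>
    simp only [VV]
    constructor
    · rintro (h1 | ⟨_, h2, h3, _⟩)
      · exact h1
      · rcases h with h | h <;> contradiction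
    · exact Or.inl

theorem VV_lift {n : ℕ} (t t' : Mon (MVar n)) (k : ℕ) (hk : k < n + 1)
    (ht : ¬ lz t (k + 1)) (ht' : ¬ lz t' (k + 1))
    (hag : ∀ p : Fin (n + 1), k < (p : ℕ) → t (vS false p) = t' (vS false p) ∧
      t (vF false p) = t' (vF false p) ∧
      ∀ a, t (vQ false a p) = t' (vQ false a p) ∧ t (vC false a p) = t' (vC false a p) ∧
        t (vB false a p) = t' (vB false a p))
    (hV : ∀ j x, VV t k hk j x ↔ VV t' k hk j x) (K : ℕ) (hkK : k ≤ K) :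
    ∀ (hK : K < n + 1) j x, VV t K hK j x ↔ VV t' K hK j x := by
  induction K, hkK using Nat.le_induction with
  | base => intro _; exact hV
  | succ K hkK ih =>
    intro hK j x
    have h1 : ∀ u : Mon (MVar n), ¬ lz u (k + 1) → ¬ Atom u (K + 1) hK j x := by
      intro u hu h
      exact hu fun p hp => h.2.2.1 p (by omega)
    obtain ⟨hs, hf, ha⟩ := hag ⟨K + 1, hK⟩ (by simp; omega)
    simp only [VV, h1 t ht, h1 t' ht', false_or, hs, hf, ha, ih]

/-- Explicit form with the state `s` one level below. -/
theorem VV_s {n : ℕ} (t : Mon (MVar n)) (k : ℕ) (hk : k + 1 < n + 1) (hk' : k < n + 1) (j x)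
    (i : Fin 4) (h : t (vS false ⟨k, hk'⟩) ≠ 0) (hq : t (vQ false i ⟨k + 1, hk⟩) ≠ 0) :
    VV t (k + 1) hk j x ↔
      (∀ a, t (vC false a ⟨k + 1, hk⟩) = dl j a) ∧ t (vS false ⟨k + 1, hk⟩) = 0 ∧
        t (vF false ⟨k + 1, hk⟩) = 0 ∧ (∀ a, t (vQ false a ⟨k + 1, hk⟩) = dl i a) ∧
        (∀ a, t (vC false a ⟨k, hk'⟩) = dl i a) ∧ (∀ a, t (vQ false a ⟨k, hk'⟩) = 0) ∧ lz t k ∧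
        t (vS false ⟨k, hk'⟩) = 1 ∧ t (vF false ⟨k, hk'⟩) = 0 ∧
        val (en k) i (fun a => t (vB false a ⟨k, hk'⟩) + en k * dl i a) ∧
        ∀ a, x a = t (vB false a ⟨k + 1, hk⟩) +
          (en k * (t (vB false 0 ⟨k, hk'⟩) + en k * dl i 0) +
            (t (vB false 1 ⟨k, hk'⟩) + en k * dl i 1)) * dl j a := by
  have hna : ¬ Atom t (k + 1) hk j x := fun h' => h (h'.2.2.1 ⟨k, hk'⟩ (by simp)).1
  simp only [VV, hna, false_or]
  constructor
  · rintro ⟨h1, h2, h3, j', x', h4, h5, h6, h7⟩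
    rw [VV_atom _ _ _ _ _ (Or.inl h)] at h5
    have : i = j' := by
      by_contra hne
      apply hq; rw [h4]; simp [dl, hne]
    subst this
    obtain ⟨a1, a2, a3, a4⟩ := h5
    rcases a4 with ⟨a4, a5, a6⟩ | ⟨a4, _⟩
    · obtain rfl : x' = _ := funext a6
      exact ⟨h1, h2, h3, h4, a1, a2, a3, a4, a5, h6, h7⟩
    · contradiction
  · rintro ⟨h1, h2, h3, h4, a1, a2, a3, a4, a5, h6, h7⟩
    refine ⟨h1, h2, h3, i, _, h4, ?_, h6, h7⟩
    rw [VV_atom _ _ _ _ _ (Or.inl h)]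
    exact ⟨a1, a2, a3, Or.inl ⟨a4, a5, fun _ => rfl⟩⟩

/-- Explicit form with the state `f` one level below. -/
theorem VV_f {n : ℕ} (t : Mon (MVar n)) (k : ℕ) (hk : k + 1 < n + 1) (hk' : k < n + 1) (j x)
    (i : Fin 4) (h : t (vF false ⟨k, hk'⟩) ≠ 0) (hq : t (vQ false i ⟨k + 1, hk⟩) ≠ 0) :
    VV t (k + 1) hk j x ↔
      (∀ a, t (vC false a ⟨k + 1, hk⟩) = dl j a) ∧ t (vS false ⟨k + 1, hk⟩) = 0 ∧
        t (vF false ⟨k + 1, hk⟩) = 0 ∧ (∀ a, t (vQ false a ⟨k + 1, hk⟩) = dl i a) ∧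
        (∀ a, t (vC false a ⟨k, hk'⟩) = dl i a) ∧ (∀ a, t (vQ false a ⟨k, hk'⟩) = 0) ∧ lz t k ∧
        t (vS false ⟨k, hk'⟩) = 0 ∧ t (vF false ⟨k, hk'⟩) = 1 ∧
        val (en k) i (fun a => t (vB false a ⟨k, hk'⟩)) ∧
        ∀ a, x a = t (vB false a ⟨k + 1, hk⟩) +
          (en k * t (vB false 0 ⟨k, hk'⟩) + t (vB false 1 ⟨k, hk'⟩)) * dl j a := by
  have hna : ¬ Atom t (k + 1) hk j x := fun h' => h (h'.2.2.1 ⟨k, hk'⟩ (by simp)).2.1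
  simp only [VV, hna, false_or]
  constructor
  · rintro ⟨h1, h2, h3, j', x', h4, h5, h6, h7⟩
    rw [VV_atom _ _ _ _ _ (Or.inr h)] at h5
    have : i = j' := by
      by_contra hne
      apply hq; rw [h4]; simp [dl, hne]
    subst this
    obtain ⟨a1, a2, a3, a4⟩ := h5
    rcases a4 with ⟨_, a5, _⟩ | ⟨a4, a5, a6⟩
    · contradiction
    · obtain rfl : x' = _ := funext a6
      exact ⟨h1, h2, h3, h4, a1, a2, a3, a4, a5, h6, h7⟩
  · rintro ⟨h1, h2, h3, h4, a1, a2, a3, a4, a5, h6, h7⟩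
    refine ⟨h1, h2, h3, i, _, h4, ?_, h6, h7⟩
    rw [VV_atom _ _ _ _ _ (Or.inr h)]
    exact ⟨a1, a2, a3, Or.inr ⟨a4, a5, fun _ => rfl⟩⟩

theorem en_zero : en 0 = 2 := rfl

theorem en_succ (k : ℕ) : en (k + 1) = en k * en k := by
  simp only [en, pow_succ, pow_mul]
  ring

theorem en_pos (k : ℕ) : 0 < en k := by simp [en]

theorem lz_succ {n : ℕ} (t : Mon (MVar n)) (k : ℕ) (hk : k < n + 1) :
    lz t (k + 1) ↔ lz t k ∧ t (vS false ⟨k, hk⟩) = 0 ∧ t (vF false ⟨k, hk⟩) = 0 ∧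
    ∀ a, t (vQ false a ⟨k, hk⟩) = 0 ∧ t (vC false a ⟨k, hk⟩) = 0 ∧
      t (vB false a ⟨k, hk⟩) = 0 := by
  constructor
  · intro h
    exact ⟨fun p hp => h p (by omega), h ⟨k, hk⟩ (by simp)⟩
  · rintro ⟨h1, h2⟩ p hp
    rcases Nat.lt_succ_iff_lt_or_eq.1 hp with h | h
    · exact h1 p h
    · obtain rfl : p = ⟨k, hk⟩ := Fin.ext h
      exact h2

theorem lz_add {n : ℕ} (r u : Mon (MVar n)) (k : ℕ) (h : lz u k) : lz (r + u) k ↔ lz r k := by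
  unfold lz at *
  constructor
  · intro h1 p hp
    have := h1 p hp
    have := h p hp
    simp_all
  · intro h1 p hp
    have := h1 p hp
    have := h p hp
    simp_all

theorem Zstep {n : ℕ} {u v : Mon (MVar n)} (huv : RuleZ n false u v) (r : Mon (MVar n)) (j x) :
    VV (r + u) 0 (by omega) j x ↔ VV (r + v) 0 (by omega) j x := by
  obtain ⟨i⟩ := huv
  have hlz : ∀ t : Mon (MVar n), lz t 0 := fun t p hp => by omega
  fin_cases i <;> fin_cases j <;>
  simp [VV, Atom, Finsupp.single_apply, Fin.forall_fin_succ, dl, hlz, en_zero] <;> grind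

theorem Pstep {n : ℕ} (i : Fin n) {u v : Mon (MVar n)} (huv : RuleP n false i u v)
    (r : Mon (MVar n)) (j x) :
    VV (r + u) (i + 1) (by omega) j x ↔ VV (r + v) (i + 1) (by omega) j x := by
  obtain ⟨k, hk⟩ := i
  have hlz1 : lz u k := by
    intro p hp
    have h1 : (⟨k, by omega⟩ : Fin (n+1)) ≠ p := by intro h; rw [← h] at hp; simp at hp
    have h2 : (⟨k + 1, by omega⟩ : Fin (n+1)) ≠ p := by intro h; rw [← h] at hp; simp at hp
    cases huv <;> simp [h1, h2]
  have hlz2 : lz v k := by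
    intro p hp
    have h1 : (⟨k, by omega⟩ : Fin (n+1)) ≠ p := by intro h; rw [← h] at hp; simp at hp
    have h2 : (⟨k + 1, by omega⟩ : Fin (n+1)) ≠ p := by intro h; rw [← h] at hp; simp at hp
    cases huv <;> simp [h1, h2]
  have hA := lz_add r u k hlz1
  have hB := lz_add r v k hlz2
  have he := en_pos k
  cases huv with
  | r1 =>
    rw [VV_s _ k _ (by omega) _ _ 0 (by simp) (by simp), VV_atom _ _ _ _ _ (by simp), Atom,
      lz_succ _ k (by omega), hA, hB]
    simp [Finsupp.single_apply, Fin.forall_fin_succ, val, dl, en_succ]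
    grind
  | r2 =>
    rw [VV_s _ k _ (by omega) _ _ 1 (by simp) (by simp),
      VV_f _ k _ (by omega) _ _ 0 (by simp) (by simp), hA, hB]
    simp [Finsupp.single_apply, Fin.forall_fin_succ, val, dl, mul_add]
    grind
  | r3 =>
    rw [VV_f _ k _ (by omega) _ _ 2 (by simp) (by simp),
      VV_f _ k _ (by omega) _ _ 1 (by simp) (by simp), hA, hB]
    simp [Finsupp.single_apply, Fin.forall_fin_succ, val, dl, mul_add]
  | r4 =>
    rw [VV_s _ k _ (by omega) _ _ 2 (by simp) (by simp),
      VV_s _ k _ (by omega) _ _ 1 (by simp) (by simp), hA, hB]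
    simp [Finsupp.single_apply, Fin.forall_fin_succ, val, dl, mul_add]
    grind
  | r5 =>
    rw [VV_f _ k _ (by omega) _ _ 3 (by simp) (by simp),
      VV_s _ k _ (by omega) _ _ 2 (by simp) (by simp), hA, hB]
    simp [Finsupp.single_apply, Fin.forall_fin_succ, val, dl, mul_add]
    grind
  | r6 =>
    rw [VV_s _ k _ (by omega) _ _ 3 (by simp) (by simp), VV_atom _ _ _ _ _ (by simp), Atom,
      lz_succ _ k (by omega), hA, hB]
    simp [Finsupp.single_apply, Fin.forall_fin_succ, val, dl, mul_add]
    grind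
  | r7 i =>
    rw [VV_f _ k _ (by omega) _ _ 1 (by simp) (by simp),
      VV_f _ k _ (by omega) _ _ 1 (by simp) (by simp), hA, hB]
    fin_cases i <;>
    simp [Finsupp.single_apply, Fin.forall_fin_succ, val, dl, mul_add]
    all_goals grind

/-- The barred variables of level `p` are absent. -/
def bz {n : ℕ} (t : Mon (MVar n)) : Prop :=
  ∀ p : Fin (n + 1), t (vS true p) = 0 ∧ t (vF true p) = 0 ∧
    ∀ a, t (vQ true a p) = 0 ∧ t (vC true a p) = 0 ∧ t (vB true a p) = 0

/-- The monomials congruent to `ℓ c̄^{m1} c^{m2}` satisfy this predicate. -/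
def SS (n m1 m2 : ℕ) (t : Mon (MVar n)) : Prop :=
  bz t ∧ t vs = 0 ∧ t vc + t vb = m2 ∧ t vcb + t vbb = m1 ∧
  ((t vl = 1 ∧ lz t n ∧ t (vS false (Fin.last n)) = 0 ∧ t (vF false (Fin.last n)) = 0 ∧
      (∀ a, t (vQ false a (Fin.last n)) = 0) ∧ (∀ a, t (vC false a (Fin.last n)) = 0) ∧
      (∀ a, t (vB false a (Fin.last n)) = (t vb + t vbb) * dl 3 a)) ∨
   (t vl = 0 ∧ VV t n (by omega) 3 (fun a => (t vb + t vbb) * dl 3 a)))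

theorem SS_congr {n m1 m2 : ℕ} (t t' : Mon (MVar n)) (k : ℕ) (hk : k < n + 1)
    (h1 : ∀ p, t (vS true p) = t' (vS true p) ∧ t (vF true p) = t' (vF true p) ∧
      ∀ a, t (vQ true a p) = t' (vQ true a p) ∧ t (vC true a p) = t' (vC true a p) ∧
        t (vB true a p) = t' (vB true a p))
    (h2 : t vs = t' vs ∧ t vl = t' vl ∧ t vc = t' vc ∧ t vcb = t' vcb ∧ t vb = t' vb ∧
      t vbb = t' vbb)
    (ht : ∃ p : Fin (n + 1), p < k + 1 ∧ (t (vS false p) ≠ 0 ∨ t (vF false p) ≠ 0))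
    (ht' : ∃ p : Fin (n + 1), p < k + 1 ∧ (t' (vS false p) ≠ 0 ∨ t' (vF false p) ≠ 0))
    (hag : ∀ p : Fin (n + 1), k < (p : ℕ) → t (vS false p) = t' (vS false p) ∧
      t (vF false p) = t' (vF false p) ∧
      ∀ a, t (vQ false a p) = t' (vQ false a p) ∧ t (vC false a p) = t' (vC false a p) ∧
        t (vB false a p) = t' (vB false a p))
    (hV : ∀ j x, VV t k hk j x ↔ VV t' k hk j x) :
    SS n m1 m2 t ↔ SS n m1 m2 t' := by
  have hl : ∀ t : Mon (MVar n),
      (∃ p : Fin (n + 1), p < k + 1 ∧ (t (vS false p) ≠ 0 ∨ t (vF false p) ≠ 0)) →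
      ¬ lz t (k + 1) := by
    rintro t ⟨p, hp, h⟩ hz
    have := hz p hp
    tauto
  have hl' : ∀ t : Mon (MVar n),
      (∃ p : Fin (n + 1), p < k + 1 ∧ (t (vS false p) ≠ 0 ∨ t (vF false p) ≠ 0)) →
      ¬ (lz t n ∧ t (vS false (Fin.last n)) = 0 ∧ t (vF false (Fin.last n)) = 0) := by
    rintro t ⟨p, hp, h⟩ ⟨hz, h3, h4⟩
    by_cases hpn : (p : ℕ) < n
    · have := hz p hpn
      tauto
    · obtain rfl : p = Fin.last n := Fin.ext (by simp; omega)
      tauto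
  have hV' := VV_lift t t' k hk (hl t ht) (hl t' ht') hag hV n (by omega) (by omega)
  have a1 := hl' t ht
  have a2 := hl' t' ht'
  obtain ⟨b1, b2, b3, b4, b5, b6⟩ := h2
  simp only [SS, bz, h1, b1, b2, b3, b4, b5, b6, hV']
  tauto

theorem SS_Z {n m1 m2 : ℕ} {u v : Mon (MVar n)} (h : RuleZ n false u v) (r : Mon (MVar n)) :
    SS n m1 m2 (r + u) ↔ SS n m1 m2 (r + v) := by
  refine SS_congr _ _ 0 (by omega) ?_ ?_ ⟨0, by simp, ?_⟩ ⟨0, by simp, ?_⟩ ?_ (Zstep h r)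
  · intro p; cases h; simp
  · cases h; simp
  · cases h; simp
  · cases h; simp
  · intro p hp
    have : 0 ≠ p := by rintro rfl; simp at hp
    cases h; simp [this]

theorem SS_P {n m1 m2 : ℕ} (i : Fin n) {u v : Mon (MVar n)} (h : RuleP n false i u v)
    (r : Mon (MVar n)) : SS n m1 m2 (r + u) ↔ SS n m1 m2 (r + v) := by
  refine SS_congr _ _ (i + 1) (by omega) ?_ ?_ ?_ ?_ ?_ (Pstep i h r)
  · intro p; cases h <;> simp
  · cases h <;> simp
  · have h1 : ∃ p ∈ ({i.succ, i.castSucc} : Set (Fin (n + 1))),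
        ((r + u) (vS false p) ≠ 0 ∨ (r + u) (vF false p) ≠ 0) := by
      cases h <;> simp
    obtain ⟨p, hp, h1⟩ := h1
    refine ⟨p, ?_, h1⟩
    rcases hp with rfl | rfl
    · simp
    · simp
  · have h1 : ∃ p ∈ ({i.succ, i.castSucc} : Set (Fin (n + 1))),
        ((r + v) (vS false p) ≠ 0 ∨ (r + v) (vF false p) ≠ 0) := by
      cases h <;> simp
    obtain ⟨p, hp, h1⟩ := h1
    refine ⟨p, ?_, h1⟩
    rcases hp with rfl | rfl
    · simp
    · simp
  · intro p hp
    have h1 : i.succ ≠ p := by rintro rfl; simp at hp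
    have h2 : i.castSucc ≠ p := by rintro rfl; simp at hp
    cases h <;> simp [h1, h2]

theorem not_SS_bar {n m1 m2 : ℕ} {t : Mon (MVar n)}
    (h : ∃ p a, t (vS true p) ≠ 0 ∨ t (vF true p) ≠ 0 ∨ t (vB true a p) ≠ 0) :
    ¬ SS n m1 m2 t := by
  rintro ⟨hb, _⟩
  obtain ⟨p, a, h⟩ := h
  have := hb p
  have := this.2.2 a
  tauto

theorem not_SS_top {n m1 m2 : ℕ} (hm : m1 + m2 < en n) {t : Mon (MVar n)}
    (h : t (vS false (Fin.last n)) ≠ 0) : ¬ SS n m1 m2 t := by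
  rintro ⟨_, _, h2, h3, h4⟩
  rcases h4 with ⟨_, _, h5, _⟩ | ⟨_, h5⟩
  · exact h h5
  · rw [VV_atom _ _ _ _ _ (Or.inl h)] at h5
    rcases h5.2.2.2 with ⟨_, _, h6⟩ | ⟨h6, _⟩
    · have := h6 3
      simp [dl] at this
      omega
    · exact h h6

theorem SS_G {n m1 m2 : ℕ} (hm : m1 + m2 < en n) {u v : Mon (MVar n)} (h : RuleG n u v)
    (r : Mon (MVar n)) : SS n m1 m2 (r + u) ↔ SS n m1 m2 (r + v) := by
  have hlast : (⟨n, by omega⟩ : Fin (n + 1)) = Fin.last n := rfl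
  cases h with
  | g1 =>
    have h1 : ∀ k ≤ n, lz (sg (vB false 3 (Fin.last n)) + sg vl + sg vb : Mon (MVar n)) k := by
      intro k hk p hp
      have : Fin.last n ≠ p := by rintro rfl; simp at hp; omega
      simp [this]
    have h2 : ∀ k ≤ n, lz (sg vl + sg vc : Mon (MVar n)) k := by
      intro k hk p hp
      simp
    simp only [SS, bz, lz_add _ _ _ (h1 n le_rfl), lz_add _ _ _ (h2 n le_rfl)]
    simp [Finsupp.single_apply, Fin.forall_fin_succ, dl]
    grind
  | g2 =>
    have h1 : ∀ k ≤ n, lz (sg (vB false 3 (Fin.last n)) + sg vl + sg vbb : Mon (MVar n)) k := by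
      intro k hk p hp
      have : Fin.last n ≠ p := by rintro rfl; simp at hp; omega
      simp [this]
    have h2 : ∀ k ≤ n, lz (sg vl + sg vcb : Mon (MVar n)) k := by
      intro k hk p hp
      simp
    simp only [SS, bz, lz_add _ _ _ (h1 n le_rfl), lz_add _ _ _ (h2 n le_rfl)]
    simp [Finsupp.single_apply, Fin.forall_fin_succ, dl]
    grind
  | g3 =>
    have h1 : lz (sg (vC false 3 (Fin.last n)) + sg (vF false (Fin.last n)) : Mon (MVar n)) n := by
      intro p hp
      have : Fin.last n ≠ p := by rintro rfl; simp at hp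
      simp [this]
    have h2 : lz (sg vl : Mon (MVar n)) n := by
      intro p hp
      simp
    simp only [SS, bz, lz_add _ _ _ h1, lz_add _ _ _ h2]
    rw [VV_atom _ _ _ _ _ (by rw [hlast]; simp), Atom, hlast, lz_add _ _ _ h1]
    simp [Finsupp.single_apply, Fin.forall_fin_succ, dl]
    grind
  | g4 =>
    exact iff_of_false (not_SS_bar ⟨Fin.last n, 0, by simp⟩) (not_SS_top hm (by simp))
  | g5 => exact iff_of_false (not_SS_top hm (by simp)) (not_SS_top hm (by simp))
  | g6 => exact iff_of_false (not_SS_top hm (by simp)) (not_SS_top hm (by simp))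
  | g7 =>
    refine iff_of_false (not_SS_bar ⟨Fin.last n, 0, by simp⟩) ?_
    rintro ⟨_, h, _⟩
    simp at h

theorem SS_rule {n m1 m2 : ℕ} (hm : m1 + m2 < en n) (u v : Mon (MVar n)) (h : Rule n u v)
    (r : Mon (MVar n)) : SS n m1 m2 (r + u) ↔ SS n m1 m2 (r + v) := by
  cases h with
  | z bar h =>
    cases bar with
    | false => exact SS_Z h r
    | true =>
      cases h
      exact iff_of_false (not_SS_bar ⟨0, 0, by simp⟩) (not_SS_bar ⟨0, 0, by simp⟩)
  | p bar i h =>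
    cases bar with
    | false => exact SS_P i h r
    | true =>
      apply iff_of_false
      · cases h <;> exact not_SS_bar ⟨i.castSucc, 0, by simp⟩
      · cases h
        case r1 => exact not_SS_bar ⟨i.succ, 0, by simp⟩
        case r6 => exact not_SS_bar ⟨i.succ, 0, by simp⟩
        all_goals exact not_SS_bar ⟨i.castSucc, 0, by simp⟩
  | g h => exact SS_G hm h r

/-- The state variables. -/
def isState {n : ℕ} : MVar n → Prop
  | .vs => True
  | .vl => True
  | .vS _ _ => True
  | .vF _ _ => True
  | _ => False

theorem rule_state {n : ℕ} {u v : Mon (MVar n)} (h : Rule n u v) :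
    (∃ y, isState y ∧ u y ≠ 0) ∧ ∃ y, isState y ∧ v y ≠ 0 := by
  cases h with
  | z bar h => cases h; exact ⟨⟨vF bar 0, trivial, by simp⟩, ⟨vS bar 0, trivial, by simp⟩⟩
  | p bar i h =>
    cases h
    · exact ⟨⟨vS bar i.castSucc, trivial, by simp⟩, ⟨vS bar i.succ, trivial, by simp⟩⟩
    · exact ⟨⟨vS bar i.castSucc, trivial, by simp⟩, ⟨vF bar i.castSucc, trivial, by simp⟩⟩
    · exact ⟨⟨vF bar i.castSucc, trivial, by simp⟩, ⟨vF bar i.castSucc, trivial, by simp⟩⟩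
    · exact ⟨⟨vS bar i.castSucc, trivial, by simp⟩, ⟨vS bar i.castSucc, trivial, by simp⟩⟩
    · exact ⟨⟨vF bar i.castSucc, trivial, by simp⟩, ⟨vS bar i.castSucc, trivial, by simp⟩⟩
    · exact ⟨⟨vS bar i.castSucc, trivial, by simp⟩, ⟨vF bar i.succ, trivial, by simp⟩⟩
    · exact ⟨⟨vF bar i.castSucc, trivial, by simp⟩, ⟨vF bar i.castSucc, trivial, by simp⟩⟩
  | g h =>
    cases h
    · exact ⟨⟨vl, trivial, by simp⟩, ⟨vl, trivial, by simp⟩⟩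
    · exact ⟨⟨vl, trivial, by simp⟩, ⟨vl, trivial, by simp⟩⟩
    · exact ⟨⟨vF false (Fin.last n), trivial, by simp⟩, ⟨vl, trivial, by simp⟩⟩
    · exact ⟨⟨vF true (Fin.last n), trivial, by simp⟩, ⟨vS false (Fin.last n), trivial, by simp⟩⟩
    · exact ⟨⟨vS false (Fin.last n), trivial, by simp⟩, ⟨vS false (Fin.last n), trivial, by simp⟩⟩
    · exact ⟨⟨vS false (Fin.last n), trivial, by simp⟩, ⟨vS false (Fin.last n), trivial, by simp⟩⟩
    · exact ⟨⟨vS true (Fin.last n), trivial, by simp⟩, ⟨vs, trivial, by simp⟩⟩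

theorem sum_le_mdeg {σ : Type*} (t : Mon σ) (A : Finset σ) : ∑ a ∈ A, t a ≤ mdeg t := by
  classical
  have h : mdeg t = ∑ a ∈ t.support ∪ A, t a :=
    Finsupp.sum_of_support_subset _ Finset.subset_union_left _ (by simp)
  rw [h]
  exact Finset.sum_le_sum_of_subset Finset.subset_union_right

theorem VV_pos {n : ℕ} (t : Mon (MVar n)) (k : ℕ) (hk : k < n + 1) (j x) (h : VV t k hk j x) :
    (∀ a, t (vC false a ⟨k, hk⟩) = dl j a) ∧
    1 ≤ t (vS false ⟨k, hk⟩) + t (vF false ⟨k, hk⟩) + t (vQ false 0 ⟨k, hk⟩) +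
      t (vQ false 1 ⟨k, hk⟩) + t (vQ false 2 ⟨k, hk⟩) + t (vQ false 3 ⟨k, hk⟩) := by
  have hat : ∀ h : Atom t k hk j x, (∀ a, t (vC false a ⟨k, hk⟩) = dl j a) ∧
    1 ≤ t (vS false ⟨k, hk⟩) + t (vF false ⟨k, hk⟩) + t (vQ false 0 ⟨k, hk⟩) +
      t (vQ false 1 ⟨k, hk⟩) + t (vQ false 2 ⟨k, hk⟩) + t (vQ false 3 ⟨k, hk⟩) := by
    rintro ⟨h1, _, _, h2⟩
    exact ⟨h1, by omega⟩
  cases k with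
  | zero => exact hat h
  | succ k =>
    rcases h with h | ⟨h1, _, _, j', _, h2, _⟩
    · exact hat h
    · refine ⟨h1, ?_⟩
      simp only [h2]
      fin_cases j' <;> simp [dl]

theorem SS_deg {n m1 m2 : ℕ} {t : Mon (MVar n)} (h : SS n m1 m2 t)
    (hne : t ≠ Finsupp.single vl 1 + Finsupp.single vcb m1 + Finsupp.single vc m2) :
    1 + m1 + m2 < mdeg t := by
  obtain ⟨hb, h1, h2, h3, h4⟩ := h
  rcases h4 with ⟨h5, h6, h7, h8, h9, h10, h11⟩ | ⟨h5, h6⟩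
  · have hd := sum_le_mdeg t {vl, vc, vb, vcb, vbb, vB false 3 (Fin.last n)}
    simp at hd
    have h12 := h11 3
    simp [dl] at h12
    by_cases h0 : t vb + t vbb = 0
    · exfalso
      apply hne
      have hlev : ∀ p, t (vS false p) = 0 ∧ t (vF false p) = 0 ∧
          ∀ a, t (vQ false a p) = 0 ∧ t (vC false a p) = 0 ∧ t (vB false a p) = 0 := by
        intro p
        by_cases hpn : (p : ℕ) < n
        · exact h6 p hpn
        · obtain rfl : p = Fin.last n := Fin.ext (by simp; omega)
          exact ⟨h7, h8, fun a => ⟨h9 a, h10 a, by rw [h11, h0, zero_mul]⟩⟩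
      ext y
      cases y with
      | vs => simp [h1]
      | vl => simp [h5]
      | vc => simp; omega
      | vcb => simp; omega
      | vb => simp; omega
      | vbb => simp; omega
      | vS bar p => cases bar <;> simp [hlev, (hb p)]
      | vF bar p => cases bar <;> simp [hlev, (hb p)]
      | vQ bar a p => cases bar <;> simp [hlev, (hb p)]
      | vC bar a p => cases bar <;> simp [hlev, (hb p)]
      | vB bar a p => cases bar <;> simp [hlev, (hb p)]
    · omega
  · obtain ⟨h7, h8⟩ := VV_pos _ _ _ _ _ h6
    have h9 := h7 3
    have hlast : (⟨n, by omega⟩ : Fin (n + 1)) = Fin.last n := rfl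
    rw [hlast] at h8 h9
    have hd := sum_le_mdeg t {vc, vb, vcb, vbb, vC false 3 (Fin.last n), vS false (Fin.last n),
      vF false (Fin.last n), vQ false 0 (Fin.last n), vQ false 1 (Fin.last n),
      vQ false 2 (Fin.last n), vQ false 3 (Fin.last n)}
    simp at hd
    simp [dl] at h9
    omega

theorem mdeg_D {n : ℕ} (j m1 m2 : ℕ) :
    mdeg (Finsupp.single vl j + Finsupp.single vcb m1 + Finsupp.single vc m2 : Mon (MVar n))
      = j + m1 + m2 := by
  unfold mdeg
  rw [Finsupp.sum_add_index' (by simp) (by simp), Finsupp.sum_add_index' (by simp) (by simp)]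
  simp

open MVar in
/-- For `α ∈ D` and any monomial `γ ≠ α` with `α + γ ∈ ⟨𝓕⟩`, the total
degree of `γ` exceeds that of `α`. -/
theorem stmt14 (n : ℕ) (α : Mon (MVar n)) (hα : α ∈ Dmon n) (γ : Mon (MVar n)) (hne : γ ≠ α)
    (h : (monomial α 1 + monomial γ 1 : MPoly n) ∈ Ideal.span (FF n)) :
    mdeg α < mdeg γ := by
  obtain ⟨j, m1, m2, hj, hm, rfl⟩ := hα
  rw [mdeg_D]
  obtain rfl | rfl : j = 0 ∨ j = 1 := by omega
  · exfalso
    apply hne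
    refine closed_of_rules (fun t => t = _) ?_ rfl h
    intro u v huv r
    obtain ⟨⟨y, hy, hu⟩, ⟨z, hz, hv⟩⟩ := rule_state huv
    have hst : ∀ y : MVar n, isState y →
        (Finsupp.single vl 0 + Finsupp.single vcb m1 + Finsupp.single vc m2 : Mon (MVar n)) y
          = 0 := by
      intro y hy
      cases y <;> simp_all [isState]
    apply iff_of_false
    · intro heq
      have h1 := hst y hy
      rw [← heq] at h1
      simp at h1
      exact hu h1.2
    · intro heq
      have h1 := hst z hz
      rw [← heq] at h1
      simp at h1
      exact hv h1.2
  · refine SS_deg (closed_of_rules (SS n m1 m2) (SS_rule (by omega)) ?_ h) hne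
    simp [SS, bz, lz]
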